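/- Let Σ be a J × J real symmetric positive definite matrix, let μ > 0, and define S : ℝ^J → ℝ by S(m) = inf_{t ∈ ℝ^J_−} ⟨m − t, Σ^{-1}(m − t)⟩. Then for every m ∈ ℝ^J, the infimal convolution inf_{m' ∈ ℝ^J} [S(m') + (1/(2μ))⟨m − m', Σ^{-1}(m − m')⟩] equals the dual expression sup_{u ∈ ℝ^J_+} [⟨m, u⟩ − ((1 + 2μ)/4)⟨u, Σ u⟩]. -/

import Mathlib

/-!
Measured in the norm `‖x‖² = ⟨x, Σ⁻¹ x⟩`, the index function `S` is the squared distance to a convex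
cone `C`, and both sides equal `dist(m, C)² / (1 + 2μ)`.

For the infimum, the triangle inequality and `(a + b)² / (1 + c) ≤ a² + b² / c` give one bound; the
point dividing the segment from `t ∈ C` to `m` in the ratio `1 : c` gives the other. This works in
every normed space and for every nonempty set `C`.

For the supremum, substitute `v = Σ u`. A vector `v` of the polar cone satisfies
`⟨m, v⟩ ≤ dist(m, C) ‖v‖`, and completing the square gives one bound. It is attained at a multiple
of `m - p`, where `p` is the projection of `m` onto the closure of `C`.
-/

open Metric
open scoped InnerProductSpace

section SquaredDistance

theorem le_infDist_sq {α : Type*} [PseudoMetricSpace α] {s : Set α} (hs : s.Nonempty) {a : ℝ}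
    {x : α} : a ≤ infDist x s ^ 2 ↔ ∀ t ∈ s, a ≤ dist x t ^ 2 := by
  simp only [← Real.sqrt_le_left infDist_nonneg, ← Real.sqrt_le_left dist_nonneg, le_infDist hs]

theorem isGLB_image_dist_sq {α : Type*} [PseudoMetricSpace α] {s : Set α} (hs : s.Nonempty)
    (x : α) : IsGLB ((fun t => dist x t ^ 2) '' s) (infDist x s ^ 2) :=
  isGLB_iff_le_iff.2 fun _ => (le_infDist_sq hs).trans Set.forall_mem_image.symm

theorem add_sq_div_one_add_le (a b : ℝ) {c : ℝ} (hc : 0 < c) :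
    (a + b) ^ 2 / (1 + c) ≤ a ^ 2 + b ^ 2 / c := by
  simpa [Fin.sum_univ_two] using Finset.sq_sum_div_le_sum_sq_div Finset.univ ![a, b]
    (g := ![1, c]) (by simp [Fin.forall_fin_two, hc])

variable {E : Type*} [SeminormedAddCommGroup E] [NormedSpace ℝ E]

theorem exists_infDist_sq_add_dist_sq_div_le {s : Set E} {t : E} (ht : t ∈ s) {c : ℝ} (hc : 0 < c)
    (x : E) : ∃ y, infDist y s ^ 2 + dist x y ^ 2 / c ≤ dist x t ^ 2 / (1 + c) := by
  let y := AffineMap.lineMap t x (1 / (1 + c))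
  have dist_y_t : dist y t = 1 / (1 + c) * dist x t := by
    rw [dist_lineMap_left, dist_comm t, Real.norm_of_nonneg (by positivity)]
  have dist_x_y : dist x y = c / (1 + c) * dist x t := by
    have one_sub_ratio : 1 - 1 / (1 + c) = c / (1 + c) := by field_simp; ring
    rw [dist_right_lineMap, dist_comm t, one_sub_ratio, Real.norm_of_nonneg (by positivity)]
  refine ⟨y, ?_⟩
  calc infDist y s ^ 2 + dist x y ^ 2 / c
      ≤ dist y t ^ 2 + dist x y ^ 2 / c := by
        gcongr
        · exact infDist_nonneg
        · exact infDist_le_dist_of_mem ht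
    _ = dist x t ^ 2 / (1 + c) := by
        rw [dist_y_t, dist_x_y]
        field_simp

theorem isGLB_range_infDist_sq_add_dist_sq_div {s : Set E} (hs : s.Nonempty) {c : ℝ} (hc : 0 < c)
    (x : E) :
    IsGLB (Set.range fun y => infDist y s ^ 2 + dist x y ^ 2 / c) (infDist x s ^ 2 / (1 + c)) := by
  constructor
  · rintro _ ⟨y, rfl⟩
    calc infDist x s ^ 2 / (1 + c)
        ≤ (infDist y s + dist x y) ^ 2 / (1 + c) := by
          gcongr
          · exact infDist_nonneg
          · exact infDist_le_infDist_add_dist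
      _ ≤ infDist y s ^ 2 + dist x y ^ 2 / c := add_sq_div_one_add_le _ _ hc
  · intro b hb
    rw [le_div_iff₀ (by positivity), le_infDist_sq hs]
    intro t ht
    obtain ⟨y, hy⟩ := exists_infDist_sq_add_dist_sq_div_le ht hc x
    exact (le_div_iff₀ (by positivity)).1 ((hb ⟨y, rfl⟩).trans hy)

end SquaredDistance

section PolarCone

variable {E : Type*} [NormedAddCommGroup E] [InnerProductSpace ℝ E]

theorem real_inner_le_infDist_mul_norm {s : Set E} (hs : s.Nonempty) {u : E}
    (hu : ∀ t ∈ s, ⟪t, u⟫_ℝ ≤ 0) (x : E) : ⟪x, u⟫_ℝ ≤ infDist x s * ‖u‖ := by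
  rcases eq_or_ne u 0 with rfl | hu0
  · simp
  rw [← div_le_iff₀ (norm_pos_iff.2 hu0), le_infDist hs]
  intro t ht
  rw [div_le_iff₀ (norm_pos_iff.2 hu0), dist_eq_norm]
  calc ⟪x, u⟫_ℝ ≤ ⟪x - t, u⟫_ℝ := by
        rw [inner_sub_left]
        linarith [hu t ht]
    _ ≤ ‖x - t‖ * ‖u‖ := real_inner_le_norm _ _

theorem inner_eq_zero_and_polar_of_forall_inner_sub_nonpos {C : PointedCone ℝ E} {x p : E}
    (hp : p ∈ C) (hmin : ∀ t ∈ C, ⟪x - p, t - p⟫_ℝ ≤ 0) :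
    ⟪p, x - p⟫_ℝ = 0 ∧ ∀ t ∈ C, ⟪t, x - p⟫_ℝ ≤ 0 := by
  have polar : ∀ t ∈ C, ⟪t, x - p⟫_ℝ ≤ 0 := fun t ht => by
    simpa [real_inner_comm] using hmin (t + p) (C.add_mem ht hp)
  have at_zero : 0 ≤ ⟪p, x - p⟫_ℝ := by
    simpa [real_inner_comm] using hmin 0 C.zero_mem
  exact ⟨le_antisymm (polar p hp) at_zero, polar⟩

variable [CompleteSpace E]

theorem exists_polar_norm_eq_infDist (C : PointedCone ℝ E) (x : E) :
    ∃ v, (∀ t ∈ C, ⟪t, v⟫_ℝ ≤ 0) ∧ ‖v‖ = infDist x C ∧ ⟪x, v⟫_ℝ = ‖v‖ ^ 2 := by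
  obtain ⟨p, hp, hdist⟩ := exists_norm_eq_iInf_of_complete_convex ⟨0, C.closure.zero_mem⟩
    isClosed_closure.isComplete C.closure.convex x
  have hmin := (norm_eq_iInf_iff_real_inner_le_zero C.closure.convex hp).1 hdist
  obtain ⟨orthogonal, polar⟩ := inner_eq_zero_and_polar_of_forall_inner_sub_nonpos hp hmin
  refine ⟨x - p, fun t ht => polar t (subset_closure ht), ?_, ?_⟩
  · rw [hdist, ← infDist_closure, infDist_eq_iInf]
    simp only [dist_eq_norm]
    rfl
  · rw [← real_inner_self_eq_norm_sq, inner_sub_left, orthogonal, sub_zero]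

theorem isGreatest_polar_inner_sub_norm_sq (C : PointedCone ℝ E) {k : ℝ} (hk : 0 < k) (x : E) :
    IsGreatest {y | ∃ u, (∀ t ∈ C, ⟪t, u⟫_ℝ ≤ 0) ∧ y = ⟪x, u⟫_ℝ - k / 4 * ‖u‖ ^ 2}
      (infDist x C ^ 2 / k) := by
  constructor
  · obtain ⟨v, polar, norm_v, inner_v⟩ := exists_polar_norm_eq_infDist C x
    refine ⟨(2 / k) • v, fun t ht => ?_, ?_⟩
    · rw [inner_smul_right]
      exact mul_nonpos_of_nonneg_of_nonpos (by positivity) (polar t ht)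
    · rw [inner_smul_right, inner_v, norm_smul, norm_v, Real.norm_of_nonneg (by positivity)]
      field_simp
      ring
  · rintro _ ⟨u, hu, rfl⟩
    have inner_le := real_inner_le_infDist_mul_norm ⟨0, C.zero_mem⟩ hu x
    have complete_square : infDist x C ^ 2 / k - infDist x C * ‖u‖ + k / 4 * ‖u‖ ^ 2
        = (infDist x C - k / 2 * ‖u‖) ^ 2 / k := by
      field_simp
      ring
    have square_nonneg : 0 ≤ (infDist x C - k / 2 * ‖u‖) ^ 2 / k := by positivity
    linarith

theorem sInf_infDist_sq_add_eq_sSup_polar (C : PointedCone ℝ E) {c : ℝ} (hc : 0 < c) (x : E) :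
    sInf (Set.range fun y => infDist y C ^ 2 + ‖x - y‖ ^ 2 / c)
      = sSup {y | ∃ u, (∀ t ∈ C, ⟪t, u⟫_ℝ ≤ 0) ∧ y = ⟪x, u⟫_ℝ - (1 + c) / 4 * ‖u‖ ^ 2} := by
  simp only [← dist_eq_norm]
  rw [(isGLB_range_infDist_sq_add_dist_sq_div ⟨0, C.zero_mem⟩ hc x).csInf_eq
      (Set.range_nonempty _),
    (isGreatest_polar_inner_sub_norm_sq C (by positivity) x).csSup_eq]

end PolarCone

section Matrix

open Matrix

open scoped Pointwise in
theorem mem_neg_positive_pi_iff {ι : Type*} {t : ι → ℝ} :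
    t ∈ -PointedCone.positive ℝ (ι → ℝ) ↔ ∀ j, t j ≤ 0 := by
  simp [Pi.le_def]

theorem forall_nonpos_dotProduct_nonpos_iff {ι : Type*} [Fintype ι] {u : ι → ℝ} :
    (∀ t : ι → ℝ, (∀ j, t j ≤ 0) → t ⬝ᵥ u ≤ 0) ↔ ∀ j, 0 ≤ u j := by
  classical
  refine ⟨fun hu j => ?_, fun hu t ht => Finset.sum_nonpos fun j _ =>
    mul_nonpos_of_nonpos_of_nonneg (ht j) (hu j)⟩
  have neg_single_nonpos : -Pi.single j 1 ≤ (0 : ι → ℝ) :=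
    neg_nonpos.2 (Pi.single_nonneg.2 zero_le_one)
  simpa using hu (-Pi.single j 1) neg_single_nonpos

open scoped MatrixOrder in
theorem exists_linearEquiv_inner_eq_dotProduct_mulVec {ι : Type*} [Fintype ι]
    {P : Matrix ι ι ℝ} (hP : P.PosDef) :
    ∃ L : (ι → ℝ) ≃ₗ[ℝ] EuclideanSpace ℝ ι, ∀ x y, ⟪L x, L y⟫_ℝ = x ⬝ᵥ (P *ᵥ y) := by
  classical
  obtain ⟨B, hB, rfl⟩ :=
    CStarAlgebra.isStrictlyPositive_iff_eq_star_mul_self.1 hP.isStrictlyPositive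
  refine ⟨B.toLinearEquiv' hB.invertible ≪≫ₗ (WithLp.linearEquiv 2 ℝ (ι → ℝ)).symm, fun x y => ?_⟩
  change B *ᵥ y ⬝ᵥ B *ᵥ x = x ⬝ᵥ ((star B * B) *ᵥ y)
  rw [← mulVec_mulVec, star_eq_conjTranspose, conjTranspose_eq_transpose_of_trivial,
    dotProduct_mulVec x, vecMul_transpose, dotProduct_comm]

theorem inf_convolution_dual_formula_general {ι : Type*} [Fintype ι] [DecidableEq ι]
    {Sig : Matrix ι ι ℝ} (hSig : Sig.PosDef) (C : PointedCone ℝ (ι → ℝ)) {μ : ℝ} (hμ : 0 < μ)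
    {S : (ι → ℝ) → ℝ}
    (hS : ∀ m, S m = sInf {y : ℝ | ∃ t ∈ C, y = (m - t) ⬝ᵥ (Sig⁻¹ *ᵥ (m - t))}) (m : ι → ℝ) :
    sInf (Set.range fun m' => S m' + (1 / (2 * μ)) * ((m - m') ⬝ᵥ (Sig⁻¹ *ᵥ (m - m'))))
      = sSup {y : ℝ | ∃ u, (∀ t ∈ C, t ⬝ᵥ u ≤ 0) ∧
          y = m ⬝ᵥ u - ((1 + 2 * μ) / 4) * (u ⬝ᵥ (Sig *ᵥ u))} := by
  obtain ⟨L, inner_L⟩ := exists_linearEquiv_inner_eq_dotProduct_mulVec hSig.inv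
  have norm_sq_L (x : ι → ℝ) : ‖L x‖ ^ 2 = x ⬝ᵥ (Sig⁻¹ *ᵥ x) := by
    rw [← real_inner_self_eq_norm_sq, inner_L]
  let K : PointedCone ℝ (EuclideanSpace ℝ ι) := C.map L.toLinearMap
  have S_eq (x : ι → ℝ) : S x = infDist (L x) K ^ 2 := by
    have K_nonempty : (K : Set (EuclideanSpace ℝ ι)).Nonempty := ⟨0, K.zero_mem⟩
    rw [hS, ← (isGLB_image_dist_sq K_nonempty (L x)).csInf_eq (K_nonempty.image _)]
    simp [K, dist_eq_norm, ← map_sub, norm_sq_L, Set.image, eq_comm]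
  have inner_L_mulVec (x u : ι → ℝ) : ⟪L x, L (Sig *ᵥ u)⟫_ℝ = x ⬝ᵥ u := by
    rw [inner_L, mulVec_mulVec, nonsing_inv_mul _ hSig.det_pos.ne'.isUnit, one_mulVec]
  have polar_iff (u : ι → ℝ) : (∀ t ∈ K, ⟪t, L (Sig *ᵥ u)⟫_ℝ ≤ 0) ↔ ∀ t ∈ C, t ⬝ᵥ u ≤ 0 := by
    simp [K, inner_L_mulVec]
  have norm_sq_L_mulVec (u : ι → ℝ) : ‖L (Sig *ᵥ u)‖ ^ 2 = u ⬝ᵥ (Sig *ᵥ u) := by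
    rw [← real_inner_self_eq_norm_sq, inner_L_mulVec, dotProduct_comm]
  have L_mulVec_surjective : Function.Surjective fun u => L (Sig *ᵥ u) :=
    L.surjective.comp (mulVec_surjective_iff_isUnit.2 hSig.isUnit)
  have duality := sInf_infDist_sq_add_eq_sSup_polar K (mul_pos two_pos hμ) (L m)
  simpa only [← L.surjective.range_comp, Function.comp_def, L_mulVec_surjective.exists, polar_iff,
    inner_L_mulVec, norm_sq_L_mulVec, ← S_eq, ← map_sub, norm_sq_L, one_div_mul_eq_div]
    using duality

end Matrix

open Matrix in
/-- Dual formula for the μ-smooth approximation of the quadratic-programming index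
function by infimal convolution: for every `m`,
`inf_{m'} [S(m') + (1/(2μ))⟨m−m', Σ⁻¹(m−m')⟩] = sup_{u ≥ 0} [⟨m, u⟩ − ((1+2μ)/4)⟨u, Σu⟩]`. -/
theorem inf_convolution_dual_formula (J : ℕ) (Sig : Matrix (Fin J) (Fin J) ℝ) (hSig : Sig.PosDef)
    (μ : ℝ) (hμ : 0 < μ)
    (S : (Fin J → ℝ) → ℝ)
    (hS : ∀ m, S m = sInf {y : ℝ | ∃ t : Fin J → ℝ, (∀ j, t j ≤ 0) ∧
      y = (m - t) ⬝ᵥ (Sig⁻¹ *ᵥ (m - t))})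
    (m : Fin J → ℝ) :
    sInf (Set.range fun m' : Fin J → ℝ =>
        S m' + (1 / (2 * μ)) * ((m - m') ⬝ᵥ (Sig⁻¹ *ᵥ (m - m'))))
      = sSup {y : ℝ | ∃ u : Fin J → ℝ, (∀ j, 0 ≤ u j) ∧
          y = m ⬝ᵥ u - ((1 + 2 * μ) / 4) * (u ⬝ᵥ (Sig *ᵥ u))} := by
  open scoped Pointwise in
  simpa only [mem_neg_positive_pi_iff, forall_nonpos_dotProduct_nonpos_iff] using
    inf_convolution_dual_formula_general hSig (-PointedCone.positive ℝ (Fin J → ℝ)) hμ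
      (by simpa only [mem_neg_positive_pi_iff] using hS) m
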